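/- Let H ∈ {0,1}^{n×k} be a partition indicator matrix into k nonempty groups (so the all-ones vector 1 lies in the column span of H). Let B = [n^{-1/2}·1, U] ∈ ℝ^{n×k}, where U is a random n×(k−1) real matrix whose columns are almost surely orthonormal and orthogonal to 1, and whose distribution is invariant under left multiplication by every orthogonal Q ∈ O(n) fixing 1. Then E[‖(I − H H†) B‖_F²] = (n − k)(k − 1)/(n − 1). -/

import Mathlib

open Matrix MeasureTheory BigOperators

/-!
Each column of `U` is an exchangeable random vector `X`, because permutation matrices are orthogonal
and fix `𝟙`. Its second moment matrix `E[X Xᵀ]` is therefore invariant under simultaneous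
permutation of rows and columns, and it annihilates `𝟙`, so it is the multiple
`E‖X‖² / (n − 1) • (I − 𝟙 𝟙ᵀ / n)` of the centering matrix. Since `P = I − H H†` annihilates `𝟙`,
`E‖P X‖² = tr (P E[X Xᵀ] Pᵀ) = E‖X‖² / (n − 1) * tr (P Pᵀ)`, where `tr (P Pᵀ) = tr P = n − k`.
-/

section PermutationInvariant

variable {ι R K : Type*} [Fintype ι]

theorem card_mul_apply_self_eq_trace_of_submatrix_perm [NonAssocSemiring R] {M : Matrix ι ι R}
    (hM : ∀ σ : Equiv.Perm ι, M.submatrix σ σ = M) (i : ι) :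
    Fintype.card ι * M i i = M.trace := by
  classical
  have hdiag (j : ι) : M j j = M i i := by
    simpa using congr_fun₂ (hM (Equiv.swap i j)) i i
  simp [trace, hdiag]

theorem card_sub_one_mul_apply_of_submatrix_perm [NonAssocRing R] {M : Matrix ι ι R}
    (hM : ∀ σ : Equiv.Perm ι, M.submatrix σ σ = M) {i j : ι} (hrow : ∑ l, M i l = 0)
    (hij : i ≠ j) : ((Fintype.card ι : R) - 1) * M i j = -M i i := by
  classical
  have hoff : ∀ l ∈ Finset.univ.erase i, M i l = M i j := fun l hl => by
    simpa [Equiv.swap_apply_of_ne_of_ne hij (Finset.ne_of_mem_erase hl).symm] using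
      congr_fun₂ (hM (Equiv.swap j l)) i j
  have hcard : ((Finset.univ.erase i).card : R) = Fintype.card ι - 1 :=
    Finset.cast_card_erase_of_mem (Finset.mem_univ i)
  rw [← Finset.add_sum_erase _ _ (Finset.mem_univ i), Finset.sum_congr rfl hoff,
    Finset.sum_const, nsmul_eq_mul, hcard] at hrow
  exact eq_neg_of_add_eq_zero_right hrow

theorem eq_smul_centering_of_submatrix_perm [DecidableEq ι] [Field K] [CharZero K]
    {M : Matrix ι ι K} (hM : ∀ σ : Equiv.Perm ι, M.submatrix σ σ = M) (hM_one : M *ᵥ 1 = 0) :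
    M = (M.trace / (Fintype.card ι - 1)) • (1 - (Fintype.card ι : K)⁻¹ • vecMulVec 1 1) := by
  ext i j
  have hrow : ∑ l, M i l = 0 := by simpa [mulVec, dotProduct] using congr_fun hM_one i
  rw [← card_mul_apply_self_eq_trace_of_submatrix_perm hM i]
  rcases subsingleton_or_nontrivial ι with _ | _
  · obtain rfl := Subsingleton.elim i j
    have hzero : M i i = 0 := by rwa [Fintype.sum_subsingleton _ i] at hrow
    simp [hzero]
  have hcard : (Fintype.card ι : K) ≠ 0 := Nat.cast_ne_zero.mpr Fintype.card_ne_zero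
  have hcard_sub : (Fintype.card ι : K) - 1 ≠ 0 :=
    sub_ne_zero.mpr (Nat.cast_ne_one.mpr Fintype.one_lt_card.ne')
  simp only [Matrix.smul_apply, Matrix.sub_apply, vecMulVec_apply, Pi.one_apply,
    smul_eq_mul, mul_one]
  obtain rfl | hij := eq_or_ne i j
  · rw [one_apply_eq]
    field_simp
  · have hoff := card_sub_one_mul_apply_of_submatrix_perm hM hrow hij
    rw [one_apply_ne hij]
    field_simp
    linear_combination hoff

end PermutationInvariant

section SecondMoment

variable {ι κ Ω : Type*} [MeasurableSpace Ω] {μ : Measure Ω} {X : Ω → ι → ℝ}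

/-- The second moment matrix `E[X Xᵀ]` of a random vector `X`. The entries are Bochner integrals, so
they are meaningful only when `X` is square-integrable. -/
noncomputable def secondMoment (X : Ω → ι → ℝ) (μ : Measure Ω) : Matrix ι ι ℝ :=
  of fun i j => ∫ ω, X ω i * X ω j ∂μ

variable [Fintype ι]

theorem trace_secondMoment (hX : ∀ i, MemLp (fun ω => X ω i) 2 μ) :
    (secondMoment X μ).trace = ∫ ω, ∑ i, X ω i ^ 2 ∂μ := by
  rw [integral_finsetSum _ fun i _ => (hX i).integrable_sq]
  simp [trace, secondMoment, sq]

theorem secondMoment_mulVec_eq_zero (hX : ∀ i, MemLp (fun ω => X ω i) 2 μ) {v : ι → ℝ}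
    (hv : ∀ᵐ ω ∂μ, X ω ⬝ᵥ v = 0) : secondMoment X μ *ᵥ v = 0 := by
  ext i
  have hint (j : ι) : Integrable (fun ω => X ω i * X ω j * v j) μ :=
    ((hX i).integrable_mul (hX j)).mul_const (v j)
  calc ∑ j, (∫ ω, X ω i * X ω j ∂μ) * v j
      = ∫ ω, ∑ j, X ω i * X ω j * v j ∂μ := by
        rw [integral_finsetSum _ fun j _ => hint j]
        simp_rw [integral_mul_const]
    _ = 0 := integral_eq_zero_of_ae <| hv.mono fun ω hω => by
        have hω' : ∑ j, X ω j * v j = 0 := hω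
        simp [mul_assoc, ← Finset.mul_sum, hω']

theorem memLp_mulVec {p : ENNReal} (hX : ∀ i, MemLp (fun ω => X ω i) p μ) (A : Matrix κ ι ℝ)
    (i : κ) : MemLp (fun ω => (A *ᵥ X ω) i) p μ :=
  memLp_finsetSum _ fun l _ => (hX l).const_mul (A i l)

theorem secondMoment_mulVec (hX : ∀ i, MemLp (fun ω => X ω i) 2 μ) (A : Matrix κ ι ℝ) :
    secondMoment (fun ω => A *ᵥ X ω) μ = A * secondMoment X μ * Aᵀ := by
  ext i j
  have hint (l m : ι) : Integrable (fun ω => A i l * A j m * (X ω l * X ω m)) μ :=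
    ((hX l).integrable_mul (hX m)).const_mul _
  have hexpand (ω : Ω) : (A *ᵥ X ω) i * (A *ᵥ X ω) j =
      ∑ l, ∑ m, A i l * A j m * (X ω l * X ω m) := by
    simp only [mulVec, dotProduct, Finset.sum_mul_sum]
    exact Finset.sum_congr rfl fun l _ => Finset.sum_congr rfl fun m _ => mul_mul_mul_comm ..
  calc ∫ ω, (A *ᵥ X ω) i * (A *ᵥ X ω) j ∂μ
      = ∑ l, ∑ m, A i l * A j m * ∫ ω, X ω l * X ω m ∂μ := by
        simp only [hexpand]
        rw [integral_finsetSum _ fun l _ => integrable_finsetSum _ fun m _ => hint l m]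
        simp only [integral_finsetSum _ fun m _ => hint _ m, integral_const_mul]
    _ = (A * secondMoment X μ * Aᵀ) i j := by
        rw [Finset.sum_comm]
        simp only [mul_apply, secondMoment, of_apply, transpose_apply, Finset.sum_mul,
          mul_right_comm]

theorem memLp_apply_of_sum_sq_le [IsFiniteMeasure μ] (hX : AEMeasurable X μ) {C : ℝ}
    (hC : ∀ᵐ ω ∂μ, ∑ i, X ω i ^ 2 ≤ C) (p : ENNReal) (i : ι) : MemLp (fun ω => X ω i) p μ := by
  refine .of_bound (aemeasurable_pi_iff.mp hX i).aestronglyMeasurable (√C) ?_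
  filter_upwards [hC] with ω hω
  have hle : X ω i ^ 2 ≤ ∑ j, X ω j ^ 2 :=
    Finset.single_le_sum (f := fun j => X ω j ^ 2) (fun j _ => sq_nonneg _) (Finset.mem_univ i)
  exact Real.abs_le_sqrt (hle.trans hω)

end SecondMoment

/-- Exchangeability of the random family `X = (X i)`: permuting the indices does not change its
joint law. Almost everywhere measurability of `X` is part of `IdentDistrib`. -/
def IsExchangeable {ι β Ω : Type*} [MeasurableSpace β] [MeasurableSpace Ω] (X : Ω → ι → β)
    (μ : Measure Ω) : Prop :=
  ∀ σ : Equiv.Perm ι, ProbabilityTheory.IdentDistrib (fun ω i => X ω (σ i)) X μ μ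

section Exchangeable

variable {ι β Ω : Type*} [MeasurableSpace β] [MeasurableSpace Ω] {μ : Measure Ω}

namespace IsExchangeable

theorem aemeasurable {X : Ω → ι → β} (hX : IsExchangeable X μ) : AEMeasurable X μ :=
  (hX 1).aemeasurable_snd

theorem comp {γ : Type*} [MeasurableSpace γ] {X : Ω → ι → β} (hX : IsExchangeable X μ) {f : β → γ}
    (hf : Measurable f) : IsExchangeable (fun ω i => f (X ω i)) μ := fun σ =>
  (hX σ).comp (u := fun x i => f (x i)) (by fun_prop)

theorem secondMoment_submatrix_perm {X : Ω → ι → ℝ} (hX : IsExchangeable X μ)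
    (σ : Equiv.Perm ι) : (secondMoment X μ).submatrix σ σ = secondMoment X μ := by
  ext i j
  exact ((hX σ).comp (u := fun x => x i * x j) (by fun_prop)).integral_eq

variable [Fintype ι] {X : Ω → ι → ℝ}

theorem secondMoment_eq_smul_centering [DecidableEq ι] (hX : IsExchangeable X μ)
    (hLp : ∀ i, MemLp (fun ω => X ω i) 2 μ) (hsum : ∀ᵐ ω ∂μ, ∑ i, X ω i = 0) :
    secondMoment X μ = ((∫ ω, ∑ i, X ω i ^ 2 ∂μ) / (Fintype.card ι - 1)) •
      (1 - (Fintype.card ι : ℝ)⁻¹ • vecMulVec 1 1) := by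
  rw [← trace_secondMoment hLp]
  exact eq_smul_centering_of_submatrix_perm hX.secondMoment_submatrix_perm
    (secondMoment_mulVec_eq_zero hLp (by simpa [dotProduct] using hsum))

theorem integral_sum_mulVec_sq {κ : Type*} [Fintype κ] (hX : IsExchangeable X μ)
    (hLp : ∀ i, MemLp (fun ω => X ω i) 2 μ) (hsum : ∀ᵐ ω ∂μ, ∑ i, X ω i = 0) {A : Matrix κ ι ℝ}
    (hA : A *ᵥ 1 = 0) :
    ∫ ω, ∑ i, (A *ᵥ X ω) i ^ 2 ∂μ =
      (∫ ω, ∑ i, X ω i ^ 2 ∂μ) / (Fintype.card ι - 1) * (A * Aᵀ).trace := by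
  classical
  rw [← trace_secondMoment (memLp_mulVec hLp A), secondMoment_mulVec hLp,
    hX.secondMoment_eq_smul_centering hLp hsum]
  rw [Matrix.mul_smul, Matrix.mul_sub, Matrix.mul_smul, mul_vecMulVec, hA, zero_vecMulVec,
    smul_zero, sub_zero, Matrix.mul_one, Matrix.smul_mul, trace_smul, smul_eq_mul]

end IsExchangeable

theorem isExchangeable_of_map_orthogonal {J : Type*} [Fintype ι] [DecidableEq ι]
    {U : Ω → ι → J → ℝ} (hU : AEMeasurable U μ)
    (hinv : ∀ Q : Matrix ι ι ℝ, Qᵀ * Q = 1 → Q *ᵥ (fun _ => 1) = (fun _ => 1) →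
      μ.map (fun ω i j => ∑ l, Q i l * U ω l j) = μ.map U) :
    IsExchangeable U μ := fun σ => by
  have hperm : (fun ω i j => ∑ l, σ.permMatrix ℝ i l * U ω l j) = fun ω i => U ω (σ i) := by
    ext ω i j
    exact congr_fun (permMatrix_mulVec (σ := σ) (v := fun l => U ω l j)) i
  refine ⟨by fun_prop, hU, ?_⟩
  rw [← hperm]
  refine hinv _ ?_ (permMatrix_mulVec _)
  rw [transpose_permMatrix, ← permMatrix_mul, mul_inv_cancel, permMatrix_one]

end Exchangeable

section ResidualProjection

variable {ι κ R : Type*} [Fintype ι] [Fintype κ] [DecidableEq κ] [CommRing R] {H : Matrix ι κ R}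

theorem inv_transpose_mul_self_mul_transpose_mul (hH : IsUnit (Hᵀ * H)) :
    (Hᵀ * H)⁻¹ * Hᵀ * H = 1 := by
  rw [Matrix.mul_assoc, nonsing_inv_mul _ ((isUnit_iff_isUnit_det _).mp hH)]

variable [DecidableEq ι]

/-- The matrix `I − H H†` with `H† = (Hᵀ H)⁻¹ Hᵀ`. Over `ℝ`, when the columns of `H` are linearly
independent, it is the orthogonal projection onto the complement of the column span of `H`. When
`Hᵀ H` is not invertible, the inverse is `0` and the matrix is `I`. -/
noncomputable def residualProjection (H : Matrix ι κ R) : Matrix ι ι R :=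
  1 - H * ((Hᵀ * H)⁻¹ * Hᵀ)

theorem transpose_residualProjection (H : Matrix ι κ R) :
    (residualProjection H)ᵀ = residualProjection H := by
  simp [residualProjection, transpose_nonsing_inv, Matrix.mul_assoc]

theorem residualProjection_mul (hH : IsUnit (Hᵀ * H)) : residualProjection H * H = 0 := by
  rw [residualProjection, Matrix.sub_mul, Matrix.mul_assoc H,
    inv_transpose_mul_self_mul_transpose_mul hH, Matrix.mul_one, Matrix.one_mul, sub_self]

theorem residualProjection_mulVec_eq_zero (hH : IsUnit (Hᵀ * H)) {v : ι → R}
    (hv : v ∈ Set.range H.mulVec) : residualProjection H *ᵥ v = 0 := by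
  obtain ⟨w, rfl⟩ := hv
  rw [mulVec_mulVec, residualProjection_mul hH, zero_mulVec]

theorem residualProjection_mul_self (hH : IsUnit (Hᵀ * H)) :
    residualProjection H * residualProjection H = residualProjection H := by
  conv_lhs => enter [2]; rw [residualProjection]
  rw [Matrix.mul_sub, ← Matrix.mul_assoc, residualProjection_mul hH, Matrix.zero_mul, sub_zero,
    Matrix.mul_one]

theorem trace_residualProjection (hH : IsUnit (Hᵀ * H)) :
    (residualProjection H).trace = Fintype.card ι - Fintype.card κ := by
  rw [residualProjection, trace_sub, trace_mul_comm, inv_transpose_mul_self_mul_transpose_mul hH,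
    trace_one, trace_one]

end ResidualProjection

section PartitionIndicator

variable {ι κ R : Type*} [DecidableEq κ]

/-- The indicator matrix of the partition of `ι` into the fibers of `g`, that is, into groups
labelled by `κ`. -/
def partitionIndicator (R : Type*) [Zero R] [One R] (g : ι → κ) : Matrix ι κ R :=
  of fun i j => if g i = j then 1 else 0

theorem partitionIndicator_mulVec [NonAssocSemiring R] [Fintype κ] (g : ι → κ) (v : κ → R) :
    partitionIndicator R g *ᵥ v = v ∘ g := by
  ext i
  simp [partitionIndicator, mulVec, dotProduct]

theorem transpose_partitionIndicator_mul_self [NonAssocSemiring R] [Fintype ι] (g : ι → κ) :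
    (partitionIndicator R g)ᵀ * partitionIndicator R g =
      diagonal fun j => ((Finset.univ.filter (g · = j)).card : R) := by
  ext a b
  obtain rfl | hab := eq_or_ne a b
  · rw [diagonal_apply_eq, Finset.natCast_card_filter]
    simp [partitionIndicator, mul_apply, ← ite_and]
  · rw [diagonal_apply_ne _ hab, mul_apply]
    refine Finset.sum_eq_zero fun i _ => ?_
    obtain hia | rfl := ne_or_eq (g i) a
    · simp [partitionIndicator, hia]
    · simp [partitionIndicator, hab]

theorem isUnit_transpose_partitionIndicator_mul_self [Field R] [CharZero R] [Fintype ι]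
    [Fintype κ] {g : ι → κ} (hg : Function.Surjective g) :
    IsUnit ((partitionIndicator R g)ᵀ * partitionIndicator R g) := by
  rw [transpose_partitionIndicator_mul_self, isUnit_diagonal, Pi.isUnit_iff]
  intro j
  obtain ⟨i, hi⟩ := hg j
  exact (Nat.cast_ne_zero.mpr (Finset.card_ne_zero_of_mem (a := i) (by simpa using hi))).isUnit

end PartitionIndicator

theorem expected_projection_error_given_constant_vector_general
    {ι κ J Ω : Type*} [Fintype ι] [Fintype κ] [Fintype J] [DecidableEq ι] [DecidableEq κ]
    [MeasurableSpace Ω] {μ : Measure Ω} [IsProbabilityMeasure μ]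
    {H : Matrix ι κ ℝ} (hH : IsUnit (Hᵀ * H)) (hone : 1 ∈ Set.range H.mulVec)
    {U : Ω → ι → J → ℝ} (hexch : ∀ a, IsExchangeable (fun ω i => U ω i a) μ)
    (hunit : ∀ a, ∀ᵐ ω ∂μ, ∑ i, U ω i a ^ 2 = 1) (hsum : ∀ a, ∀ᵐ ω ∂μ, ∑ i, U ω i a = 0) :
    ∫ ω, (∑ i, (residualProjection H *ᵥ fun _ => (√(Fintype.card ι))⁻¹) i ^ 2
        + ∑ i, ∑ a, (residualProjection H *ᵥ fun l => U ω l a) i ^ 2) ∂μ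
      = ((Fintype.card ι : ℝ) - Fintype.card κ) * Fintype.card J / (Fintype.card ι - 1) := by
  have hP_one := residualProjection_mulVec_eq_zero hH hone
  have hP_const (c : ℝ) : (residualProjection H *ᵥ fun _ => c) = 0 := by
    rw [show (fun _ : ι => c) = c • 1 by ext; simp, mulVec_smul, hP_one, smul_zero]
  have hLp (a : J) := memLp_apply_of_sum_sq_le (hexch a).aemeasurable
    ((hunit a).mono fun _ => le_of_eq) 2
  have hnorm (a : J) : ∫ ω, ∑ i, U ω i a ^ 2 ∂μ = 1 := by
    simp [integral_congr_ae (hunit a)]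
  have hcol (a : J) : ∫ ω, ∑ i, (residualProjection H *ᵥ fun l => U ω l a) i ^ 2 ∂μ =
      ((Fintype.card ι : ℝ) - Fintype.card κ) / (Fintype.card ι - 1) := by
    rw [(hexch a).integral_sum_mulVec_sq (hLp a) (hsum a) hP_one, hnorm,
      transpose_residualProjection, residualProjection_mul_self hH, trace_residualProjection hH]
    ring
  simp only [hP_const, Pi.zero_apply, zero_pow two_ne_zero, Finset.sum_const_zero, zero_add,
    Finset.sum_comm (s := (Finset.univ : Finset ι))]
  rw [integral_finsetSum _ fun a _ => integrable_finsetSum _ fun i _ =>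
    (memLp_mulVec (hLp a) _ i).integrable_sq]
  simp only [hcol, Finset.sum_const, Finset.card_univ, nsmul_eq_mul]
  ring

/-- Let `H` be a partition indicator matrix into `k` nonempty groups (so the
all-ones vector lies in its column span), and let `B = [n^{-1/2}·𝟙, U]` where `U` is a random
`n × (k−1)` matrix whose columns are a.s. orthonormal and orthogonal to `𝟙`, with distribution
invariant under every orthogonal `Q ∈ O(n)` fixing `𝟙`.  Then
`E[‖(I − H H†) B‖_F²] = (n − k)(k − 1)/(n − 1)`. -/
theorem expected_projection_error_given_constant_vector
    {n k : ℕ} (hk : 1 ≤ k) (hkn : k ≤ n)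
    (g : Fin n → Fin k) (hg : Function.Surjective g)
    (H : Matrix (Fin n) (Fin k) ℝ)
    (hH : H = Matrix.of fun i j => if g i = j then (1 : ℝ) else 0)
    (Hdag : Matrix (Fin k) (Fin n) ℝ) (hHdag : Hdag = (Hᵀ * H)⁻¹ * Hᵀ)
    (P : Matrix (Fin n) (Fin n) ℝ) (hP : P = 1 - H * Hdag)
    {Ω : Type*} [MeasurableSpace Ω] (μ : Measure Ω) [IsProbabilityMeasure μ]
    (U : Ω → Fin n → Fin (k - 1) → ℝ) (hUmeas : Measurable U)
    (horth : ∀ᵐ ω ∂μ,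
      (∀ a b : Fin (k - 1), ∑ i, U ω i a * U ω i b = if a = b then (1 : ℝ) else 0)
      ∧ (∀ a : Fin (k - 1), ∑ i, U ω i a = 0))
    (hinv : ∀ Q : Matrix (Fin n) (Fin n) ℝ, Qᵀ * Q = 1 →
      (Q.mulVec (fun _ => 1) = fun _ => 1) →
      Measure.map (fun ω => fun i j => ∑ l, Q i l * U ω l j) μ = Measure.map U μ) :
    ∫ ω, ((∑ i, (∑ l, P i l * (Real.sqrt n)⁻¹) ^ 2)
        + ∑ i, ∑ a : Fin (k - 1), (∑ l, P i l * U ω l a) ^ 2) ∂μ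
      = ((n : ℝ) - k) * ((k : ℝ) - 1) / ((n : ℝ) - 1) := by
  subst hP hHdag hH
  have hrows : IsExchangeable U μ := isExchangeable_of_map_orthogonal hUmeas.aemeasurable hinv
  have herror := expected_projection_error_given_constant_vector_general
    (isUnit_transpose_partitionIndicator_mul_self hg) ⟨1, partitionIndicator_mulVec g 1⟩
    (fun a => hrows.comp (measurable_pi_apply a))
    (fun a => horth.mono fun ω hω => by simpa [sq] using hω.1 a a)
    (fun a => horth.mono fun ω hω => hω.2 a)
  simp only [Fintype.card_fin, Nat.cast_sub hk, Nat.cast_one] at herror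
  exact herror
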